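/- arXiv:1903.11051 — 2 statements merged into one kernel-verified Lean document; each statement's English description precedes it below -/
import Mathlib

section
/- Let Γ be a finite group acting by group automorphisms on a group K̃, let K̃' be a Γ-stable subgroup of K̃, and set K = K̃^Γ and K' = (K̃')^Γ. Let κ : K̃ → K̃ be an anti-involution (a bijection with κ(xy) = κ(y)κ(x) and κ∘κ = id) such that: (i) κ commutes with the action of every σ ∈ Γ; (ii) κ(K̃' x K̃') = K̃' x K̃' for every x ∈ K̃; (iii) for every k ∈ K, every 1-cocycle of Γ with values in k K̃' k⁻¹ ∩ K̃' is a coboundary. Then for every k ∈ K one has κ(k) ∈ K' k K'; in particular κ fixes every double coset K' k K' ⊆ K setwise. -/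
/-!
The points `k` and `κ k` are both `Γ`-fixed and lie in one double coset, so it is enough to compare
two `Γ`-fixed points `x` and `y = a * x * b` of a double coset `H x J`. Comparing `y` with `σ • y`
gives `x⁻¹ * (a⁻¹ * σ • a) * x = b * (σ • b)⁻¹`, so the cocycle `σ ↦ a⁻¹ * σ • a` takes values in
`H ∩ x J x⁻¹`. If `β` splits it there, then `a * β` is a `Γ`-fixed element of `H`, and the
complementary factor `(a * β * x)⁻¹ * y`, which lies in `J`, is a product of fixed elements.
-/

open DoubleCoset
open scoped Pointwise

section

variable {Γ G : Type*} [Monoid Γ] [Group G] [MulDistribMulAction Γ G]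

/-- Crossed homomorphisms, i.e. nonabelian 1-cocycles of `Γ` with values in `G`. Mathlib's
`groupCohomology.IsMulCocycle₁` writes the two factors in the opposite order, which suits
abelian coefficients only. -/
def IsCrossedHom (c : Γ → G) : Prop :=
  ∀ σ τ, c (σ * τ) = c σ * σ • c τ

variable (Γ) in
/-- Triviality of the nonabelian cohomology set `H¹(Γ, L)`, for `L` a subgroup of a group on which
`Γ` acts. Cocycles and the elements splitting them live in the ambient group and are required to
lie in `L`, so that no action on the subtype `L` is needed. -/
def HasTrivialH1 (L : Subgroup G) : Prop :=
  ∀ c : Γ → G, (∀ σ, c σ ∈ L) → IsCrossedHom c → ∃ b ∈ L, ∀ σ, c σ = b * (σ • b)⁻¹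

theorem isCrossedHom_inv_mul_smul (g : G) : IsCrossedHom fun σ : Γ ↦ g⁻¹ * σ • g := by
  intro σ τ
  simp only [mul_smul, smul_mul', smul_inv']
  group

theorem smul_mul_eq_self_iff {σ : Γ} {g b : G} :
    σ • (g * b) = g * b ↔ g⁻¹ * σ • g = b * (σ • b)⁻¹ := by
  rw [smul_mul', eq_mul_inv_iff_mul_eq, mul_assoc, inv_mul_eq_iff_eq_mul]

theorem HasTrivialH1.exists_mul_mem_fixedPoints {L : Subgroup G} (hL : HasTrivialH1 Γ L) {g : G}
    (hg : ∀ σ : Γ, g⁻¹ * σ • g ∈ L) : ∃ b ∈ L, g * b ∈ FixedPoints.subgroup Γ G := by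
  obtain ⟨b, hb, hsplit⟩ := hL _ hg (isCrossedHom_inv_mul_smul g)
  exact ⟨b, hb, fun σ ↦ smul_mul_eq_self_iff.mpr (hsplit σ)⟩

theorem mem_conj_smul_iff {J : Subgroup G} {x g : G} :
    g ∈ MulAut.conj x • J ↔ x⁻¹ * g * x ∈ J := by
  rw [Subgroup.mem_pointwise_smul_iff_inv_smul_mem, MulAut.smul_def, MulAut.conj_inv_apply]

theorem conj_inv_mul_smul_eq {σ : Γ} {x a b : G} (hx : σ • x = x)
    (hy : σ • (a * x * b) = a * x * b) : x⁻¹ * (a⁻¹ * σ • a) * x = b * (σ • b)⁻¹ := by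
  simpa only [smul_mul', hx, mul_inv_rev, mul_assoc] using smul_mul_eq_self_iff.mp hy

theorem stmt_2_general {H J : Subgroup G} (hH : ∀ (σ : Γ), ∀ a ∈ H, σ • a ∈ H)
    (hJ : ∀ (σ : Γ), ∀ b ∈ J, σ • b ∈ J) {x y : G} (hx : x ∈ FixedPoints.subgroup Γ G)
    (hy : y ∈ FixedPoints.subgroup Γ G) (hxy : y ∈ doubleCoset x H J)
    (hH1 : HasTrivialH1 Γ (H ⊓ MulAut.conj x • J)) :
    y ∈ doubleCoset x (H ⊓ FixedPoints.subgroup Γ G : Subgroup G)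
      (J ⊓ FixedPoints.subgroup Γ G : Subgroup G) := by
  obtain ⟨a, ha, b, hb, rfl⟩ := mem_doubleCoset.mp hxy
  have hcocycle (σ : Γ) : a⁻¹ * σ • a ∈ H ⊓ MulAut.conj x • J := by
    refine ⟨H.mul_mem (H.inv_mem ha) (hH σ a ha), mem_conj_smul_iff.mpr ?_⟩
    rw [conj_inv_mul_smul_eq (hx σ) (hy σ)]
    exact J.mul_mem hb (J.inv_mem (hJ σ b hb))
  obtain ⟨β, ⟨hβH, hβJ⟩, hfixed⟩ := hH1.exists_mul_mem_fixedPoints hcocycle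
  have hright : (a * β * x)⁻¹ * (a * x * b) = (x⁻¹ * β * x)⁻¹ * b := by group
  refine mem_doubleCoset.mpr ⟨a * β, ⟨H.mul_mem ha hβH, hfixed⟩,
    (a * β * x)⁻¹ * (a * x * b), ⟨?_, ?_⟩, (mul_inv_cancel_left _ _).symm⟩
  · rw [hright]
    exact J.mul_mem (J.inv_mem (mem_conj_smul_iff.mp hβJ)) hb
  · exact Subgroup.mul_mem _ (Subgroup.inv_mem _ (Subgroup.mul_mem _ hfixed hx)) hy

end

/-- Lemma 2.3: let a finite group `Γ` act by group automorphisms on a group `K̃`, `K'` a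
`Γ`-stable subgroup, and `κ` an anti-involution of `K̃` commuting with the `Γ`-action and
fixing every double coset `K̃' x K̃'` setwise. If for every `Γ`-fixed `k` every 1-cocycle of
`Γ` valued in `k K̃' k⁻¹ ∩ K̃'` is a coboundary, then `κ(k) ∈ K' k K'` for every `Γ`-fixed
`k`, where `K' = (K̃')^Γ`; i.e. `κ` fixes every double coset `K' k K'` setwise. -/
theorem stmt_2 (Γ Kt : Type*) [Group Γ] [Finite Γ] [Group Kt]
    [MulDistribMulAction Γ Kt]
    (K' : Subgroup Kt) (hK' : ∀ (σ : Γ) (x : Kt), x ∈ K' → σ • x ∈ K')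
    (κ : Kt → Kt) (hbij : Function.Bijective κ)
    (hanti : ∀ x y : Kt, κ (x * y) = κ y * κ x) (hinvol : ∀ x : Kt, κ (κ x) = x)
    (hcomm : ∀ (σ : Γ) (x : Kt), κ (σ • x) = σ • κ x)
    (hstab : ∀ x : Kt, κ '' {z : Kt | ∃ a ∈ K', ∃ b ∈ K', z = a * x * b} =
        {z : Kt | ∃ a ∈ K', ∃ b ∈ K', z = a * x * b})
    (hcoc : ∀ k : Kt, (∀ σ : Γ, σ • k = k) → ∀ c : Γ → Kt,
        (∀ σ, c σ ∈ K' ∧ k⁻¹ * c σ * k ∈ K') →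
        (∀ σ τ, c (σ * τ) = c σ * σ • c τ) →
        ∃ b : Kt, (b ∈ K' ∧ k⁻¹ * b * k ∈ K') ∧ ∀ σ, c σ = b * (σ • b)⁻¹) :
    ∀ k : Kt, (∀ σ : Γ, σ • k = k) →
      ∃ a ∈ K', ∃ b ∈ K',
        (∀ σ : Γ, σ • a = a) ∧ (∀ σ : Γ, σ • b = b) ∧ κ k = a * k * b := by
  intro k hk
  have hmem : κ k ∈ doubleCoset k K' K' := mem_doubleCoset.mpr <|
    (hstab k).subset <| Set.mem_image_of_mem κ <| mem_doubleCoset.mp <| mem_doubleCoset_self K' K' k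
  have hH1 : HasTrivialH1 Γ (K' ⊓ MulAut.conj k • K') := by
    simpa only [HasTrivialH1, IsCrossedHom, Subgroup.mem_inf, mem_conj_smul_iff] using hcoc k hk
  obtain ⟨a, ⟨ha, hafix⟩, b, ⟨hb, hbfix⟩, hab⟩ := mem_doubleCoset.mp <|
    stmt_2_general hK' hK' hk (fun σ ↦ by rw [← hcomm, hk]) hmem hH1
  exact ⟨a, ha, b, hb, hafix, hbfix, hab⟩
end

section
/- With the notation of the setup, for every u ∈ U_S the matrix w u w — which equals the entrywise conjugate ū of u — is conjugate to u by an element of H: there exists h ∈ H with w u w = h u h⁻¹. -/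
noncomputable section

/-- The block matrix `g(α,β) = [[α, β], [β̄, ᾱ]]`, where `x ↦ x̄` is given by `σ`. -/
def gmat {E : Type*} [Field E] {n : ℕ} (σ : E → E) (α β : Matrix (Fin n) (Fin n) E) :
    Matrix (Fin n ⊕ Fin n) (Fin n ⊕ Fin n) E :=
  Matrix.fromBlocks α β (β.map σ) (α.map σ)

/-- The group `G` of invertible matrices of the form `g(α,β)`. -/
def GuoG (E : Type*) [Field E] (n : ℕ) (σ : E → E) :
    Set (Matrix (Fin n ⊕ Fin n) (Fin n ⊕ Fin n) E) :=
  {g | (∃ α β : Matrix (Fin n) (Fin n) E, g = gmat σ α β) ∧ IsUnit g}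

/-- The subgroup `H` of elements `g(α,0)` of `G`. -/
def GuoH (E : Type*) [Field E] (n : ℕ) (σ : E → E) :
    Set (Matrix (Fin n ⊕ Fin n) (Fin n ⊕ Fin n) E) :=
  {g | (∃ α : Matrix (Fin n) (Fin n) E, g = gmat σ α 0) ∧ IsUnit g}

/-- The element `ε = δ·diag(I_n, -I_n)`. -/
def Guoeps (E : Type*) [Field E] (n : ℕ) (δ : E) :
    Matrix (Fin n ⊕ Fin n) (Fin n ⊕ Fin n) E :=
  δ • Matrix.fromBlocks 1 0 0 (-1)

/-- The symmetric space `S = {s ∈ G | ε s ε⁻¹ = s⁻¹}`. -/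
def GuoS (E : Type*) [Field E] (n : ℕ) (σ : E → E) (δ : E) :
    Set (Matrix (Fin n ⊕ Fin n) (Fin n ⊕ Fin n) E) :=
  {s | s ∈ GuoG E n σ ∧ Guoeps E n δ * s * (Guoeps E n δ)⁻¹ = s⁻¹}

/-- The map `ρ : g ↦ g ε g⁻¹ ε⁻¹`. -/
def Guorho (E : Type*) [Field E] (n : ℕ) (δ : E)
    (g : Matrix (Fin n ⊕ Fin n) (Fin n ⊕ Fin n) E) :
    Matrix (Fin n ⊕ Fin n) (Fin n ⊕ Fin n) E :=
  g * Guoeps E n δ * g⁻¹ * (Guoeps E n δ)⁻¹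

/-- The set `U` of unipotent elements of `G`. -/
def GuoU (E : Type*) [Field E] (n : ℕ) (σ : E → E) :
    Set (Matrix (Fin n ⊕ Fin n) (Fin n ⊕ Fin n) E) :=
  {g | g ∈ GuoG E n σ ∧ IsNilpotent (g - 1)}

/-- The set `U_S = U ∩ S`. -/
def GuoUS (E : Type*) [Field E] (n : ℕ) (σ : E → E) (δ : E) :
    Set (Matrix (Fin n ⊕ Fin n) (Fin n ⊕ Fin n) E) :=
  GuoU E n σ ∩ GuoS E n σ δ

/-!
The Cayley transform `X = (u - 1) (u + 1)⁻¹` is compatible with conjugation and with `x ↦ x̄`. It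
turns a unipotent `u` into a nilpotent `X`, and `ε u ε⁻¹ = u⁻¹` into `ε X ε⁻¹ = -X`, so that
`X = g(0, β)` with `β β̄` nilpotent. The semilinear operator `v ↦ β v̄` is then nilpotent and has a
Jordan basis. If `P` is the matrix of this basis, then `β P̄ = P J` where `J` has entries in
`{0, 1}`, hence `J̄ = J`. Consequently `γ = P̄ P⁻¹` satisfies `γ β = β̄ γ̄`, which says that
`h = g(γ, 0)` conjugates `X` to `X̄`, and therefore `u` to `ū`.
-/

open Module Matrix
open scoped Ring

section JordanBasis

section Ring

variable {R S V V' : Type*} [Ring R] [Ring S] [AddCommGroup V] [Module R V] [AddCommGroup V']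
  [Module S V'] {σ : R →+* S} {T : V →ₛₗ[σ] V'}

theorem linearIndepOn_mkQ_ker (hσ : Function.Injective σ) {X : Set V} (hX : LinearIndepOn S T X) :
    LinearIndepOn R (LinearMap.ker T).mkQ X := by
  rw [LinearIndepOn, linearIndependent_iff'] at hX ⊢
  intro s c hc x hx
  have hmem : ∑ x ∈ s, c x • (x : V) ∈ LinearMap.ker T := by
    rw [← Submodule.Quotient.mk_eq_zero, ← Submodule.mkQ_apply, map_sum, ← hc]
    simp only [map_smul]
  rw [LinearMap.mem_ker, map_sum] at hmem
  simp only [LinearMap.map_smulₛₗ] at hmem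
  exact (map_eq_zero_iff σ hσ).1 (hX s _ hmem x hx)

theorem sup_inf_ker_eq_of_map_le_map [RingHomSurjective σ] {P W : Submodule R V} (hPW : P ≤ W)
    (h : W.map T ≤ P.map T) : P ⊔ W ⊓ LinearMap.ker T = W := by
  rw [inf_comm, ← sup_inf_assoc_of_le _ hPW, inf_eq_right]
  exact (LinearMap.map_le_map_iff T).1 h

end Ring

variable {K V : Type*} [DivisionRing K] [AddCommGroup V] [Module K V] {σ : K →+* K}

/-- A Jordan basis of the subspace `W` for a nilpotent semilinear endomorphism `T`: a basis which is
a disjoint union of chains `v ↦ T v ↦ T (T v) ↦ ⋯ ↦ 0`. It is encoded as a set of vectors of the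
ambient space, so that bases of the subspaces of a filtration can be compared by inclusion. -/
structure IsJordanBasis (T : V →ₛₗ[σ] V) (W : Submodule K V) (B : Set V) : Prop where
  linearIndepOn : LinearIndepOn K id B
  span_eq : Submodule.span K B = W
  map_mem : ∀ x ∈ B, T x ≠ 0 → T x ∈ B
  injOn : Set.InjOn T {x ∈ B | T x ≠ 0}

variable [RingHomSurjective σ] {T : V →ₛₗ[σ] V}

/-- Each chain of `B` is prolonged by one preimage of its first vector, and new chains of length one
come from extending the last vectors of the chains to a basis of `W ⊓ ker T`. -/
theorem IsJordanBasis.exists_of_map {W : Submodule K V} (hW : W.map T ≤ W) {B : Set V}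
    (hB : IsJordanBasis T (W.map T) B) : ∃ B', IsJordanBasis T W B' := by
  have hBW : B ⊆ W := fun x hx => hW (hB.span_eq ▸ Submodule.subset_span hx)
  obtain ⟨X, hBX, hXW, hX⟩ : ∃ X, {x ∈ B | T x ≠ 0} ⊆ X ∧ X ⊆ W ∧ Set.BijOn T X B := by
    refine hB.injOn.bijOn_image.exists_extend_of_subset (fun x hx => hBW hx.1) ?_ fun y hy => ?_
    · exact Set.image_subset_iff.2 fun x hx => hB.map_mem x hx.1 hx.2
    · exact Submodule.mem_map.1 (hB.span_eq ▸ Submodule.subset_span hy)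
  obtain ⟨N, hBN, hN, hNspan⟩ : ∃ N, {x ∈ B | T x = 0} ⊆ N ∧ LinearIndepOn K id N ∧
      Submodule.span K N = W ⊓ LinearMap.ker T := by
    obtain ⟨N, hNker, hBN, hspan, hN⟩ :=
      exists_linearIndepOn_extension (hB.linearIndepOn.mono (Set.sep_subset B (T · = 0)))
        (t := (W ⊓ LinearMap.ker T : Submodule K V)) fun x hx => Submodule.mem_inf.2
          ⟨hBW hx.1, hx.2⟩
    rw [Set.image_id, Set.image_id] at hspan
    exact ⟨N, hBN, hN, le_antisymm (Submodule.span_le.2 hNker) hspan⟩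
  have hNT : N ⊆ LinearMap.ker T := fun x hx => (hNspan.le (Submodule.subset_span hx)).2
  have hB_subset : B ⊆ N ∪ X := fun x hx => by
    by_cases h : T x = 0
    exacts [.inl (hBN ⟨hx, h⟩), .inr (hBX ⟨hx, h⟩)]
  have mem_X : ∀ x ∈ N ∪ X, T x ≠ 0 → x ∈ X := fun x hx h => hx.resolve_left fun hxN => h (hNT hxN)
  refine ⟨N ∪ X, ?_, ?_, fun x hx h => hB_subset (hX.mapsTo (mem_X x hx h)),
    hX.injOn.mono fun x hx => mem_X x hx.1 hx.2⟩
  · have hTX : LinearIndepOn K T X := by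
      rw [linearIndepOn_iff_image hX.injOn, hX.image_eq]
      exact hB.linearIndepOn
    exact hN.union_id_of_quotient hNT (linearIndepOn_mkQ_ker σ.injective hTX)
  · have hmap : W.map T ≤ (Submodule.span K X).map T := by
      rw [Submodule.map_span, hX.image_eq, hB.span_eq]
    rw [Submodule.span_union, hNspan, sup_comm,
      sup_inf_ker_eq_of_map_le_map (Submodule.span_le.2 hXW) hmap]

theorem exists_isJordanBasis {k : ℕ} {W : Submodule K V} (hW : W.map T ≤ W)
    (hT : ∀ v ∈ W, T^[k] v = 0) : ∃ B, IsJordanBasis T W B := by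
  induction k generalizing W with
  | zero =>
    have hbot : W = ⊥ := (Submodule.eq_bot_iff W).2 hT
    exact ⟨∅, linearIndepOn_empty K id, by rw [Submodule.span_empty, hbot], by simp, by simp⟩
  | succ k ih =>
    obtain ⟨B, hB⟩ := ih (Submodule.map_mono hW) (by rintro _ ⟨v, hv, rfl⟩; exact hT v hv)
    exact hB.exists_of_map hW

theorem exists_basis_apply_eq_zero_or_mem_range {ι : Type*} (e : Basis ι K V) {k : ℕ}
    (hT : ∀ v, T^[k] v = 0) :
    ∃ b : Basis ι K V, ∀ i, T (b i) = 0 ∨ T (b i) ∈ Set.range b := by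
  obtain ⟨B, hB⟩ := exists_isJordanBasis (W := ⊤) le_top fun v _ => hT v
  let b : Basis B K V := .mk hB.linearIndepOn (by simpa using hB.span_eq.ge)
  have hb : Set.range b = B := by simp [b]
  refine ⟨b.reindex (b.indexEquiv e), fun i => or_iff_not_imp_left.2 fun h => ?_⟩
  rw [b.range_reindex, hb]
  rw [b.reindex_apply] at h ⊢
  exact hB.map_mem _ (hb.subset (Set.mem_range_self _)) h

end JordanBasis

section TwistedSimilarity

theorem matrix_map_map_of_involutive {l m α : Type*} {σ : α → α} (hσ : Function.Involutive σ)
    (M : Matrix l m α) : (M.map σ).map σ = M :=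
  Matrix.ext fun i j => hσ (M i j)

variable {R n : Type*} [CommSemiring R] [Fintype n]

/-- The `σ`-semilinear endomorphism `v ↦ β v̄` of `Rⁿ`, where `v̄` is `v` with `σ` applied to its
entries. A change of basis with matrix `P` replaces `β` by `P⁻¹ β P̄`. -/
def twistedMulVec (σ : R →+* R) (β : Matrix n n R) : (n → R) →ₛₗ[σ] (n → R) where
  toFun v := β *ᵥ (σ ∘ v)
  map_add' v w := by rw [← mulVec_add]; congr 1; ext; simp
  map_smul' c v := by rw [← mulVec_smul]; congr 1; ext; simp

theorem twistedMulVec_iterate_two_mul {σ : R →+* R} (hσ : Function.Involutive σ) [DecidableEq n]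
    (β : Matrix n n R) (k : ℕ) (v : n → R) :
    (twistedMulVec σ β)^[2 * k] v = ((β * β.map σ) ^ k) *ᵥ v := by
  have iterate_two : ∀ v, (twistedMulVec σ β)^[2] v = (β * β.map σ) *ᵥ v := fun v => by
    have hv : σ ∘ (σ ∘ v) = v := funext fun i => hσ (v i)
    have hmap : σ ∘ (β *ᵥ (σ ∘ v)) = β.map σ *ᵥ (σ ∘ (σ ∘ v)) :=
      funext fun i => σ.map_mulVec β (σ ∘ v) i
    change β *ᵥ (σ ∘ (β *ᵥ (σ ∘ v))) = _
    rw [hmap, hv, mulVec_mulVec]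
  induction k with
  | zero => simp
  | succ k ih =>
    rw [mul_add_one, add_comm, Function.iterate_add_apply, ih, iterate_two, mulVec_mulVec,
      pow_succ']

variable {E : Type*} [Field E] [DecidableEq n]

theorem exists_isUnit_mul_map_eq_mul {σ : E →+* E} [RingHomSurjective σ]
    {β : Matrix n n E} {k : ℕ} (hβ : ∀ v, (twistedMulVec σ β)^[k] v = 0) :
    ∃ P J : Matrix n n E, IsUnit P ∧ J.map σ = J ∧ β * P.map σ = P * J := by
  obtain ⟨b, hb⟩ := exists_basis_apply_eq_zero_or_mem_range (Pi.basisFun E n) hβ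
  have := (Pi.basisFun E n).invertibleToMatrix b
  refine ⟨(Pi.basisFun E n).toMatrix b, b.toMatrix (twistedMulVec σ β ∘ b),
    isUnit_of_invertible _, ?_, ?_⟩
  · ext i j
    rw [map_apply, Basis.toMatrix_apply, Function.comp_apply]
    obtain h | ⟨l, h⟩ := hb j
    · simp [h]
    · simp [← h, Finsupp.single_apply, apply_ite σ]
  · rw [Basis.toMatrix_mul_toMatrix]
    rfl

theorem exists_isUnit_mul_eq_map_mul_map {σ : E →+* E} (hσ : Function.Involutive σ)
    {β : Matrix n n E} (hβ : IsNilpotent (β * β.map σ)) :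
    ∃ γ : Matrix n n E, IsUnit γ ∧ γ * β = β.map σ * γ.map σ := by
  have : RingHomSurjective σ := ⟨hσ.surjective⟩
  obtain ⟨k, hk⟩ := hβ
  obtain ⟨P, J, hP, hJ, hPJ⟩ := exists_isUnit_mul_map_eq_mul (k := 2 * k)
    fun v => (twistedMulVec_iterate_two_mul hσ β k v).trans (by rw [hk, zero_mulVec])
  have hmap := matrix_map_map_of_involutive hσ (l := n) (m := n)
  have hPσ : IsUnit (P.map σ) := hP.map σ.mapMatrix
  let γ := P.map σ * P⁻¹
  have hγP : γ * P = P.map σ := nonsing_inv_mul_cancel_right P _ ((isUnit_iff_isUnit_det P).1 hP)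
  have hγP' : γ.map σ * P.map σ = P := by rw [← Matrix.map_mul, hγP, hmap]
  refine ⟨γ, hPσ.mul (isUnit_nonsing_inv_iff.2 hP), hPσ.mul_right_cancel ?_⟩
  calc γ * β * P.map σ = P.map σ * J := by rw [mul_assoc, hPJ, ← mul_assoc, hγP]
    _ = (β * P.map σ).map σ := by rw [hPJ, Matrix.map_mul, hJ]
    _ = β.map σ * γ.map σ * P.map σ := by rw [Matrix.map_mul, hmap, mul_assoc, hγP']

end TwistedSimilarity

section Cayley

variable {R S : Type*} [Ring R] [Ring S]

/-- The Cayley transform `(u - 1) (u + 1)⁻¹`, written as `1 - 2 (u + 1)⁻¹`. It linearizes inversion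
to negation while preserving conjugacy. As `Ring.inverse` is zero on nonunits, it is meaningful only
if `u + 1` is a unit. -/
def cayley (u : R) : R :=
  1 - 2 * (u + 1)⁻¹ʳ

theorem isUnit_add_one_of_isNilpotent_sub_one (h2 : IsUnit (2 : R)) {u : R}
    (hu : IsNilpotent (u - 1)) : IsUnit (u + 1) := by
  have : u + 1 = (u - 1) + 2 := by rw [← one_add_one_eq_two]; abel
  rw [this]
  exact hu.isUnit_add_right_of_commute h2 (Commute.ofNat_right _ 2)

theorem isNilpotent_cayley {u : R} (hu1 : IsUnit (u + 1)) (hu : IsNilpotent (u - 1)) :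
    IsNilpotent (cayley u) := by
  have hcomm : Commute (u - 1) (u + 1)⁻¹ʳ := by
    obtain ⟨a, ha⟩ := hu1
    rw [← ha, Ring.inverse_unit]
    apply Commute.units_inv_right
    simp [ha]
  have hcayley : cayley u = (u - 1) * (u + 1)⁻¹ʳ := by
    have : u - 1 = (u + 1) - 2 := by rw [← one_add_one_eq_two]; abel
    rw [cayley, this, sub_mul, Ring.mul_inverse_cancel _ hu1]
  exact hcayley ▸ hcomm.isNilpotent_mul_right hu

theorem map_cayley (f : R →+* S) {u : R} (hu : IsUnit (u + 1)) :
    f (cayley u) = cayley (f u) := by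
  obtain ⟨a, ha⟩ := hu
  have hfa : f u + 1 = Units.map (f : R →* S) a := by simp [ha]
  rw [cayley, cayley, hfa, ← ha, Ring.inverse_unit, Ring.inverse_unit, ← map_inv, map_sub, map_mul,
    map_one, map_ofNat]
  rfl

theorem cayley_inv {u : Rˣ} (hu : IsUnit (u + 1 : R)) : cayley (↑u⁻¹ : R) = -cayley (u : R) := by
  have hinv : (↑u⁻¹ + 1 : R)⁻¹ʳ = (u + 1 : R)⁻¹ʳ * u := by
    have : (↑u⁻¹ + 1 : R) = ↑u⁻¹ * (u + 1) := by simp [mul_add, add_comm]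
    rw [this, Ring.inverse_mul (.inl u⁻¹.isUnit), Ring.inverse_unit, inv_inv]
  have hsum : (u + 1 : R)⁻¹ʳ * u + (u + 1 : R)⁻¹ʳ = 1 := by
    rw [← mul_add_one, Ring.inverse_mul_cancel _ hu]
  rw [cayley, cayley, hinv, eq_sub_of_add_eq hsum]
  noncomm_ring

theorem semiconjBy_cayley_iff (h2 : IsUnit (2 : R)) {h u u' : R} (hu : IsUnit (u + 1))
    (hu' : IsUnit (u' + 1)) : SemiconjBy h (cayley u) (cayley u') ↔ SemiconjBy h u u' := by
  obtain ⟨a, ha⟩ := hu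
  obtain ⟨a', ha'⟩ := hu'
  have hcayley : h * cayley u - cayley u' * h = 2 * (↑a'⁻¹ * h - h * ↑a⁻¹) := by
    rw [cayley, cayley, ← ha, ← ha', Ring.inverse_unit, Ring.inverse_unit]
    noncomm_ring
  have hadd : h * (u + 1) - (u' + 1) * h = h * u - u' * h := by noncomm_ring
  calc SemiconjBy h (cayley u) (cayley u')
      ↔ SemiconjBy h (↑a⁻¹ : R) ↑a'⁻¹ := by
        rw [SemiconjBy, ← sub_eq_zero, hcayley, h2.mul_right_eq_zero, sub_eq_zero, eq_comm,
          SemiconjBy]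
    _ ↔ SemiconjBy h (u + 1) (u' + 1) := by rw [SemiconjBy.units_inv_right_iff, ha, ha']
    _ ↔ SemiconjBy h u u' := by
        rw [SemiconjBy, ← sub_eq_zero, hadd, sub_eq_zero, SemiconjBy]

section Matrix

variable {A ι : Type*} [CommRing A] [Fintype ι] [DecidableEq ι]

theorem isUnit_two_matrix (h2 : IsUnit (2 : A)) : IsUnit (2 : Matrix ι ι A) := by
  simpa only [map_ofNat] using h2.map (algebraMap A (Matrix ι ι A))

theorem semiconjBy_cayley_map_iff (h2 : IsUnit (2 : A)) (σ : A →+* A) {u : Matrix ι ι A}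
    (hu : IsUnit (u + 1)) {h : Matrix ι ι A} :
    SemiconjBy h (cayley u) ((cayley u).map σ) ↔ SemiconjBy h u (u.map σ) := by
  have huσ : IsUnit (σ.mapMatrix u + 1) := by
    rw [← map_one σ.mapMatrix, ← map_add]
    exact hu.map σ.mapMatrix
  have hmap : (cayley u).map σ = cayley (u.map σ) := map_cayley σ.mapMatrix hu
  rw [hmap]
  exact semiconjBy_cayley_iff (isUnit_two_matrix h2) hu huσ

end Matrix

end Cayley

section Blocks

variable {n : ℕ} {E : Type*} [Field E]

theorem swap_mul_mul_swap_of_mem_guoG {σ : E → E} (hσ : Function.Involutive σ)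
    {g : Matrix (Fin n ⊕ Fin n) (Fin n ⊕ Fin n) E} (hg : g ∈ GuoG E n σ) :
    fromBlocks 0 1 1 0 * g * fromBlocks 0 1 1 0 = g.map σ := by
  obtain ⟨⟨α, β, rfl⟩, -⟩ := hg
  simp [gmat, fromBlocks_multiply, fromBlocks_map, matrix_map_map_of_involutive hσ]

theorem semiconjBy_inv_of_mem_guoS {σ : E → E} {δ : E} (hδ : δ ≠ 0)
    {s : Matrix (Fin n ⊕ Fin n) (Fin n ⊕ Fin n) E} (hs : s ∈ GuoS E n σ δ) :
    SemiconjBy (fromBlocks 1 0 0 (-1)) s s⁻¹ := by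
  have hε : IsUnit (Guoeps E n δ).det := by
    rw [Guoeps, det_smul, det_fromBlocks_zero₂₁, det_neg]
    simp [hδ]
  have hεs : Guoeps E n δ * s = s⁻¹ * Guoeps E n δ := by
    rw [← hs.2, nonsing_inv_mul_cancel_right _ _ hε]
  rw [Guoeps, Matrix.smul_mul, Matrix.mul_smul] at hεs
  exact smul_right_injective _ hδ hεs

theorem exists_eq_gmat_zero_of_semiconjBy (h2 : (2 : E) ≠ 0) {σ : E → E}
    {X : Matrix (Fin n ⊕ Fin n) (Fin n ⊕ Fin n) E}
    (hsign : SemiconjBy (fromBlocks 1 0 0 (-1)) X (-X))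
    (hswap : SemiconjBy (fromBlocks 0 1 1 0) X (X.map σ)) : ∃ β, X = gmat σ 0 β := by
  obtain ⟨A, B, C, D, rfl⟩ : ∃ A B C D, X = fromBlocks A B C D :=
    ⟨_, _, _, _, (fromBlocks_toBlocks X).symm⟩
  simp only [SemiconjBy, fromBlocks_multiply, fromBlocks_neg, fromBlocks_map, fromBlocks_inj,
    one_mul, zero_mul, mul_one, mul_zero, neg_mul, mul_neg, add_zero, zero_add,
    neg_neg] at hsign hswap
  have hA : A = 0 := by
    have : (2 : E) • A = 0 := by rw [two_smul, ← eq_neg_iff_add_eq_zero]; exact hsign.1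
    exact (smul_eq_zero.1 this).resolve_left h2
  have hC : C = B.map σ := hswap.1
  have hD : D = A.map σ := hswap.2.1
  exact ⟨B, by rw [gmat, hD, hC, hA]⟩

theorem exists_cayley_eq_gmat_zero (h2 : (2 : E) ≠ 0) {σ : E →+* E} (hσ : Function.Involutive σ)
    {δ : E} (hδ : δ ≠ 0) {u : Matrix (Fin n ⊕ Fin n) (Fin n ⊕ Fin n) E}
    (hS : u ∈ GuoS E n σ δ) (hu : IsUnit (u + 1)) : ∃ β, cayley u = gmat σ 0 β := by
  refine exists_eq_gmat_zero_of_semiconjBy h2 ?_ ?_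
  · have hsign := semiconjBy_inv_of_mem_guoS hδ hS
    obtain ⟨u, rfl⟩ := hS.1.2
    have hinv : IsUnit (↑u⁻¹ + 1 : Matrix (Fin n ⊕ Fin n) (Fin n ⊕ Fin n) E) := by
      simpa [mul_add, add_comm] using u⁻¹.isUnit.mul hu
    rw [← coe_units_inv] at hsign
    rw [← cayley_inv hu]
    exact (semiconjBy_cayley_iff (isUnit_two_matrix h2.isUnit) hu hinv).2 hsign
  · refine (semiconjBy_cayley_map_iff h2.isUnit σ hu).2 ?_
    rw [SemiconjBy, ← swap_mul_mul_swap_of_mem_guoG hσ hS.1, mul_assoc _ (fromBlocks 0 1 1 0)]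
    simp [fromBlocks_multiply]

theorem exists_mem_guoH_semiconjBy_map {σ : E →+* E} (hσ : Function.Involutive σ)
    {β : Matrix (Fin n) (Fin n) E} (hβ : IsNilpotent (gmat σ 0 β)) :
    ∃ h ∈ GuoH E n σ, SemiconjBy h (gmat σ 0 β) ((gmat σ 0 β).map σ) := by
  have hmap := matrix_map_map_of_involutive hσ (l := Fin n) (m := Fin n)
  have hββ : IsNilpotent (β * β.map σ) := by
    obtain ⟨k, hk⟩ := hβ.pow_succ 1
    have hsq : gmat σ 0 β ^ 2 = fromBlocks (β * β.map σ) 0 0 (β.map σ * β) := by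
      simp [gmat, sq, fromBlocks_multiply]
    rw [hsq, fromBlocks_diagonal_pow, ← fromBlocks_zero, fromBlocks_inj] at hk
    exact ⟨k, hk.1⟩
  obtain ⟨γ, hγ, hγβ⟩ := exists_isUnit_mul_eq_map_mul_map hσ hββ
  have hγβ' : γ.map σ * β.map σ = β * γ := by
    rw [← Matrix.map_mul, hγβ, Matrix.map_mul, hmap, hmap]
  refine ⟨gmat σ γ 0, ⟨⟨γ, rfl⟩, ?_⟩, ?_⟩
  · have hγσ : IsUnit (γ.map σ) := hγ.map σ.mapMatrix
    simpa [gmat] using ⟨hγ, hγσ⟩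
  · simp [SemiconjBy, gmat, fromBlocks_multiply, fromBlocks_map, hmap, hγβ, hγβ']

theorem stmt_12_general (hchar : ringChar E ≠ 2) {σ : E →+* E} (hσ : Function.Involutive σ)
    {δ : E} (hδ : δ ≠ 0) {u : Matrix (Fin n ⊕ Fin n) (Fin n ⊕ Fin n) E} (hu : u ∈ GuoUS E n σ δ) :
    fromBlocks 0 1 1 0 * u * fromBlocks 0 1 1 0 = u.map σ ∧
      ∃ h ∈ GuoH E n σ, fromBlocks 0 1 1 0 * u * fromBlocks 0 1 1 0 = h * u * h⁻¹ := by
  have h2 : (2 : E) ≠ 0 := Ring.two_ne_zero hchar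
  obtain ⟨⟨-, hnil⟩, hS⟩ := hu
  have hu1 : IsUnit (u + 1) :=
    isUnit_add_one_of_isNilpotent_sub_one (isUnit_two_matrix h2.isUnit) hnil
  obtain ⟨β, hβ⟩ := exists_cayley_eq_gmat_zero h2 hσ hδ hS hu1
  obtain ⟨h, hH, hh⟩ := exists_mem_guoH_semiconjBy_map hσ (hβ ▸ isNilpotent_cayley hu1 hnil)
  have hconj : SemiconjBy h u (u.map σ) :=
    (semiconjBy_cayley_map_iff h2.isUnit σ hu1).1 (hβ ▸ hh)
  have hw := swap_mul_mul_swap_of_mem_guoG hσ hS.1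
  refine ⟨hw, h, hH, ?_⟩
  rw [hw, hconj.eq, mul_nonsing_inv_cancel_right _ _ ((isUnit_iff_isUnit_det h).1 hH.2)]

end Blocks

/-- Proposition 4.3 of the paper: with `w = [[0, I_n], [I_n, 0]]`, for every `u ∈ U_S` the
matrix `w u w`, which equals the entrywise conjugate `ū` of `u`, is conjugate to `u` by an
element of `H`. -/
theorem stmt_12 (n : ℕ) (F E : Type*) [Field F] [Field E] [Algebra F E]
    (hchar : ringChar F ≠ 2) (hdim : Module.finrank F E = 2)
    (σ : E ≃ₐ[F] E) (hσinv : ∀ x : E, σ (σ x) = x) (hσne : σ ≠ AlgEquiv.refl)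
    (δ : E) (hδ0 : δ ≠ 0) (hδ2 : ∃ c : F, algebraMap F E c = δ ^ 2)
    (hδgen : Algebra.adjoin F {δ} = ⊤)
    (w : Matrix (Fin n ⊕ Fin n) (Fin n ⊕ Fin n) E)
    (hw : w = Matrix.fromBlocks 0 1 1 0) :
    ∀ u ∈ GuoUS E n (⇑σ) δ,
      w * u * w = u.map σ ∧ ∃ h ∈ GuoH E n (⇑σ), w * u * w = h * u * h⁻¹ := by
  subst hw
  have hcharE : ringChar E ≠ 2 := Algebra.ringChar_eq F E ▸ hchar
  exact fun u hu => stmt_12_general hcharE (σ := (σ : E →+* E)) hσinv hδ0 hu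
end
end
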